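/- Let k ∈ (0,1). For every α ∈ (0, K(k)), the inverse width κ(α) := Z(α;k) + k·sn(α;k)·cn(α;k)·dn(α;k)/(1 + k·sn(α;k)²) is strictly positive. -/

import Mathlib

noncomputable section

/-- The complete elliptic integral of the first kind. -/
def Kcomp (k : ℝ) : ℝ :=
  ∫ θ in (0 : ℝ)..(Real.pi / 2), (Real.sqrt (1 - k ^ 2 * Real.sin θ ^ 2))⁻¹

/-- The complete elliptic integral of the second kind. -/
def Ecomp (k : ℝ) : ℝ :=
  ∫ θ in (0 : ℝ)..(Real.pi / 2), Real.sqrt (1 - k ^ 2 * Real.sin θ ^ 2)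

/-- The Jacobi zeta function `Z(α;k) = ∫₀^α dn(t;k)² dt − (E/K)·α`. -/
def Zjac (k : ℝ) (dn : ℝ → ℝ) (α : ℝ) : ℝ :=
  (∫ t in (0 : ℝ)..α, (dn t) ^ 2) - (Ecomp k / Kcomp k) * α

/-! Since `sn` increases on `[0, K]`, `dn² = 1 - k² sn²` decreases there, so its average over
`[0, α]` is at least its average over `[0, K]`, which is `E / K`; that is, `Z(α) ≥ 0`. The remaining
summand of the inverse width is positive because `sn`, `cn` and `dn` are positive on `(0, K)`. Both
facts come from the amplitude `am x = ∫₀ˣ dn`, which satisfies `sn = sin ∘ am` and `cn = cos ∘ am`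
and maps `K` to `π / 2`. -/

open Set Real

theorem mul_integral_le_mul_integral_of_antitoneOn {f : ℝ → ℝ} {a b c : ℝ}
    (hf : AntitoneOn f (Icc a b)) (hc : c ∈ Icc a b) :
    (c - a) * ∫ t in a..b, f t ≤ (b - a) * ∫ t in a..c, f t := by
  obtain ⟨hac, hcb⟩ := hc
  have hf_left : AntitoneOn f (Icc a c) := hf.mono (Icc_subset_Icc_right hcb)
  have hf_right : AntitoneOn f (Icc c b) := hf.mono (Icc_subset_Icc_left hac)
  have int_left : IntervalIntegrable f MeasureTheory.volume a c :=
    AntitoneOn.intervalIntegrable (by rwa [uIcc_of_le hac])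
  have int_right : IntervalIntegrable f MeasureTheory.volume c b :=
    AntitoneOn.intervalIntegrable (by rwa [uIcc_of_le hcb])
  have left_ge : (c - a) * f c ≤ ∫ t in a..c, f t := by
    simpa using intervalIntegral.integral_mono_on hac intervalIntegrable_const int_left
      fun t ht ↦ hf_left ht (right_mem_Icc.2 hac) ht.2
  have right_le : ∫ t in c..b, f t ≤ (b - c) * f c := by
    simpa using intervalIntegral.integral_mono_on hcb int_right intervalIntegrable_const
      fun t ht ↦ hf_right (left_mem_Icc.2 hcb) ht ht.1
  rw [← intervalIntegral.integral_add_adjacent_intervals int_left int_right]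
  linear_combination (c - a) * right_le + (b - c) * left_ge

/-- Legendre's `Δ(θ) = √(1 - k² sin² θ)`, the integrand of the elliptic integral of the second
kind. -/
def legendreDelta (k θ : ℝ) : ℝ :=
  √(1 - k ^ 2 * sin θ ^ 2)

/-- The incomplete elliptic integral of the first kind in Legendre form, as a function of the
modulus `k` and the amplitude `φ`. -/
def ellipticF (k φ : ℝ) : ℝ :=
  ∫ θ in (0 : ℝ)..φ, (legendreDelta k θ)⁻¹

section LegendreForm

variable {k : ℝ}

theorem continuous_legendreDelta : Continuous (legendreDelta k) := by
  unfold legendreDelta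
  fun_prop

theorem legendreDelta_pos (hk : k ^ 2 < 1) (θ : ℝ) : 0 < legendreDelta k θ := by
  refine sqrt_pos.2 (sub_pos.2 ?_)
  calc k ^ 2 * sin θ ^ 2 ≤ k ^ 2 := mul_le_of_le_one_right (sq_nonneg k) (sin_sq_le_one θ)
    _ < 1 := hk

theorem continuous_inv_legendreDelta (hk : k ^ 2 < 1) :
    Continuous fun θ ↦ (legendreDelta k θ)⁻¹ :=
  continuous_legendreDelta.inv₀ fun θ ↦ (legendreDelta_pos hk θ).ne'

theorem strictMono_ellipticF (hk : k ^ 2 < 1) : StrictMono (ellipticF k) :=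
  strictMono_of_hasDerivAt_pos
    (fun φ ↦ (continuous_inv_legendreDelta hk).integral_hasStrictDerivAt 0 φ |>.hasDerivAt)
    fun φ ↦ inv_pos.2 (legendreDelta_pos hk φ)

theorem Kcomp_pos (hk : k ^ 2 < 1) : 0 < Kcomp k :=
  intervalIntegral.intervalIntegral_pos_of_pos
    ((continuous_inv_legendreDelta hk).intervalIntegrable _ _)
    (fun θ ↦ inv_pos.2 (legendreDelta_pos hk θ)) pi_div_two_pos

end LegendreForm

/-- The triple `(sn, cn, dn)` solves the initial value problem that characterises the Jacobi
elliptic functions of modulus `k`. -/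
structure IsJacobiElliptic (k : ℝ) (sn cn dn : ℝ → ℝ) : Prop where
  hasDerivAt_sn : ∀ x, HasDerivAt sn (cn x * dn x) x
  hasDerivAt_cn : ∀ x, HasDerivAt cn (-(sn x * dn x)) x
  hasDerivAt_dn : ∀ x, HasDerivAt dn (-(k ^ 2 * sn x * cn x)) x
  sn_zero : sn 0 = 0
  cn_zero : cn 0 = 1
  dn_zero : dn 0 = 1

/-- The Jacobi amplitude `am`, encoded as the primitive of `dn` that vanishes at `0`. -/
def jacobiAm (dn : ℝ → ℝ) (x : ℝ) : ℝ :=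
  ∫ t in (0 : ℝ)..x, dn t

theorem jacobiAm_zero (dn : ℝ → ℝ) : jacobiAm dn 0 = 0 :=
  intervalIntegral.integral_same

namespace IsJacobiElliptic

variable {k : ℝ} {sn cn dn : ℝ → ℝ}

theorem continuous_dn (h : IsJacobiElliptic k sn cn dn) : Continuous dn :=
  continuous_iff_continuousAt.2 fun x ↦ (h.hasDerivAt_dn x).continuousAt

theorem dn_sq (h : IsJacobiElliptic k sn cn dn) (x : ℝ) : dn x ^ 2 = 1 - k ^ 2 * sn x ^ 2 := by
  have hasDerivAt_zero (y : ℝ) : HasDerivAt (fun x ↦ dn x ^ 2 + k ^ 2 * sn x ^ 2) 0 y :=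
    (((h.hasDerivAt_dn y).fun_pow 2).add
      (((h.hasDerivAt_sn y).fun_pow 2).const_mul (k ^ 2))).congr_deriv (by push_cast; ring)
  have conserved := is_const_of_deriv_eq_zero (fun y ↦ (hasDerivAt_zero y).differentiableAt)
    (fun y ↦ (hasDerivAt_zero y).deriv) x 0
  simp only [h.sn_zero, h.dn_zero] at conserved
  linear_combination conserved

theorem hasDerivAt_am (h : IsJacobiElliptic k sn cn dn) (x : ℝ) :
    HasDerivAt (jacobiAm dn) (dn x) x :=
  (h.continuous_dn.integral_hasStrictDerivAt 0 x).hasDerivAt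

-- Both `(sn, cn)` and `(sin ∘ am, cos ∘ am)` rotate with angular velocity `dn`, so their distance
-- is constant.
theorem sn_eq_sin_am_and_cn_eq_cos_am (h : IsJacobiElliptic k sn cn dn) (x : ℝ) :
    sn x = sin (jacobiAm dn x) ∧ cn x = cos (jacobiAm dn x) := by
  have hasDerivAt_zero (y : ℝ) : HasDerivAt
      (fun x ↦ (sn x - sin (jacobiAm dn x)) ^ 2 + (cn x - cos (jacobiAm dn x)) ^ 2) 0 y :=
    ((((h.hasDerivAt_sn y).sub (h.hasDerivAt_am y).sin).fun_pow 2).add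
      (((h.hasDerivAt_cn y).sub (h.hasDerivAt_am y).cos).fun_pow 2)).congr_deriv
        (by simp only [Pi.sub_apply]; push_cast; ring)
  have dist_sq_eq_zero := is_const_of_deriv_eq_zero
    (fun y ↦ (hasDerivAt_zero y).differentiableAt) (fun y ↦ (hasDerivAt_zero y).deriv) x 0
  simp only [h.sn_zero, h.cn_zero, jacobiAm_zero, sin_zero, cos_zero, sub_self, ne_eq,
    OfNat.ofNat_ne_zero, not_false_eq_true, zero_pow, add_zero] at dist_sq_eq_zero
  obtain ⟨sn_sub_sq, cn_sub_sq⟩ :=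
    (add_eq_zero_iff_of_nonneg (sq_nonneg _) (sq_nonneg _)).1 dist_sq_eq_zero
  exact ⟨sub_eq_zero.1 (sq_eq_zero_iff.1 sn_sub_sq), sub_eq_zero.1 (sq_eq_zero_iff.1 cn_sub_sq)⟩

theorem sn_eq_sin_am (h : IsJacobiElliptic k sn cn dn) (x : ℝ) : sn x = sin (jacobiAm dn x) :=
  (h.sn_eq_sin_am_and_cn_eq_cos_am x).1

theorem cn_eq_cos_am (h : IsJacobiElliptic k sn cn dn) (x : ℝ) : cn x = cos (jacobiAm dn x) :=
  (h.sn_eq_sin_am_and_cn_eq_cos_am x).2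

theorem abs_dn (h : IsJacobiElliptic k sn cn dn) (x : ℝ) :
    |dn x| = legendreDelta k (jacobiAm dn x) := by
  rw [legendreDelta, ← h.sn_eq_sin_am, ← h.dn_sq, sqrt_sq_eq_abs]

theorem dn_pos (h : IsJacobiElliptic k sn cn dn) (hk : k ^ 2 < 1) (x : ℝ) : 0 < dn x := by
  have dn_ne_zero (y : ℝ) : dn y ≠ 0 := abs_pos.1 (h.abs_dn y ▸ legendreDelta_pos hk _)
  by_contra! dn_nonpos
  obtain ⟨y, hy⟩ := mem_range_of_exists_le_of_exists_ge h.continuous_dn ⟨x, dn_nonpos⟩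
    ⟨0, h.dn_zero ▸ zero_le_one⟩
  exact dn_ne_zero y hy

theorem legendreDelta_am (h : IsJacobiElliptic k sn cn dn) (hk : k ^ 2 < 1) (x : ℝ) :
    legendreDelta k (jacobiAm dn x) = dn x := by
  rw [← h.abs_dn, abs_of_pos (h.dn_pos hk x)]

theorem strictMono_am (h : IsJacobiElliptic k sn cn dn) (hk : k ^ 2 < 1) :
    StrictMono (jacobiAm dn) :=
  strictMono_of_hasDerivAt_pos h.hasDerivAt_am (h.dn_pos hk)

theorem integral_comp_am_mul_dn (h : IsJacobiElliptic k sn cn dn) {f : ℝ → ℝ}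
    (hf : Continuous f) (x : ℝ) :
    ∫ t in (0 : ℝ)..x, f (jacobiAm dn t) * dn t = ∫ θ in (0 : ℝ)..jacobiAm dn x, f θ := by
  simpa only [Function.comp_apply, jacobiAm_zero] using
    intervalIntegral.integral_comp_mul_deriv (a := 0) (b := x)
      (fun t _ ↦ h.hasDerivAt_am t) h.continuous_dn.continuousOn hf

theorem ellipticF_am (h : IsJacobiElliptic k sn cn dn) (hk : k ^ 2 < 1) (x : ℝ) :
    ellipticF k (jacobiAm dn x) = x := by
  rw [ellipticF, ← h.integral_comp_am_mul_dn (continuous_inv_legendreDelta hk)]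
  simp only [h.legendreDelta_am hk, inv_mul_cancel₀ (h.dn_pos hk _).ne',
    intervalIntegral.integral_const, sub_zero, smul_eq_mul, mul_one]

theorem am_Kcomp (h : IsJacobiElliptic k sn cn dn) (hk : k ^ 2 < 1) :
    jacobiAm dn (Kcomp k) = π / 2 :=
  (strictMono_ellipticF hk).injective (h.ellipticF_am hk (Kcomp k))

theorem integral_dn_sq_Kcomp (h : IsJacobiElliptic k sn cn dn) (hk : k ^ 2 < 1) :
    ∫ t in (0 : ℝ)..Kcomp k, dn t ^ 2 = Ecomp k :=
  calc ∫ t in (0 : ℝ)..Kcomp k, dn t ^ 2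
      = ∫ t in (0 : ℝ)..Kcomp k, legendreDelta k (jacobiAm dn t) * dn t := by
        simp only [h.legendreDelta_am hk, sq]
    _ = ∫ θ in (0 : ℝ)..π / 2, legendreDelta k θ := by
        rw [h.integral_comp_am_mul_dn continuous_legendreDelta, h.am_Kcomp hk]
    _ = Ecomp k := rfl

theorem am_mem_Icc (h : IsJacobiElliptic k sn cn dn) (hk : k ^ 2 < 1) {x : ℝ}
    (hx : x ∈ Icc 0 (Kcomp k)) : jacobiAm dn x ∈ Icc 0 (π / 2) := by
  rw [← jacobiAm_zero dn, ← h.am_Kcomp hk]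
  exact (h.strictMono_am hk).monotone.mapsTo_Icc hx

theorem am_mem_Ioo (h : IsJacobiElliptic k sn cn dn) (hk : k ^ 2 < 1) {x : ℝ}
    (hx : x ∈ Ioo 0 (Kcomp k)) : jacobiAm dn x ∈ Ioo 0 (π / 2) := by
  rw [← jacobiAm_zero dn, ← h.am_Kcomp hk]
  exact (h.strictMono_am hk).mapsTo_Ioo hx

theorem sn_pos (h : IsJacobiElliptic k sn cn dn) (hk : k ^ 2 < 1) {x : ℝ}
    (hx : x ∈ Ioo 0 (Kcomp k)) : 0 < sn x := by
  obtain ⟨am_pos, am_lt⟩ := h.am_mem_Ioo hk hx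
  rw [h.sn_eq_sin_am]
  exact sin_pos_of_pos_of_lt_pi am_pos (by linarith [pi_pos])

theorem cn_pos (h : IsJacobiElliptic k sn cn dn) (hk : k ^ 2 < 1) {x : ℝ}
    (hx : x ∈ Ioo 0 (Kcomp k)) : 0 < cn x := by
  obtain ⟨am_pos, am_lt⟩ := h.am_mem_Ioo hk hx
  rw [h.cn_eq_cos_am]
  exact cos_pos_of_mem_Ioo ⟨by linarith [pi_pos], am_lt⟩

theorem antitoneOn_dn_sq (h : IsJacobiElliptic k sn cn dn) (hk : k ^ 2 < 1) :
    AntitoneOn (fun x ↦ dn x ^ 2) (Icc 0 (Kcomp k)) := by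
  intro x hx y hy hxy
  obtain ⟨am_x_nonneg, am_x_le⟩ := h.am_mem_Icc hk hx
  obtain ⟨-, am_y_le⟩ := h.am_mem_Icc hk hy
  have sn_nonneg : 0 ≤ sn x := by
    rw [h.sn_eq_sin_am]
    exact sin_nonneg_of_nonneg_of_le_pi am_x_nonneg (by linarith [pi_pos])
  have sn_le_sn : sn x ≤ sn y := by
    rw [h.sn_eq_sin_am, h.sn_eq_sin_am]
    exact sin_le_sin_of_le_of_le_pi_div_two (by linarith [pi_pos]) am_y_le
      ((h.strictMono_am hk).monotone hxy)
  simp only [h.dn_sq]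
  gcongr

theorem Zjac_nonneg (h : IsJacobiElliptic k sn cn dn) (hk : k ^ 2 < 1) {x : ℝ}
    (hx : x ∈ Icc 0 (Kcomp k)) : 0 ≤ Zjac k dn x := by
  have average_le := mul_integral_le_mul_integral_of_antitoneOn (h.antitoneOn_dn_sq hk) hx
  rw [h.integral_dn_sq_Kcomp hk, sub_zero, sub_zero] at average_le
  rw [Zjac, sub_nonneg, div_mul_eq_mul_div, div_le_iff₀ (Kcomp_pos hk)]
  linarith only [average_le]

end IsJacobiElliptic

/-- The inverse width `κ(α) = Z(α;k) + k·sn(α)cn(α)dn(α)/(1 + k·sn²(α))` of the dark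
breather is strictly positive for every `α ∈ (0, K(k))`. -/
theorem inverse_width_positive
    (k : ℝ) (hk : k ∈ Set.Ioo (0 : ℝ) 1)
    (sn cn dn : ℝ → ℝ)
    (hsn : ∀ x, HasDerivAt sn (cn x * dn x) x)
    (hcn : ∀ x, HasDerivAt cn (-(sn x * dn x)) x)
    (hdn : ∀ x, HasDerivAt dn (-(k ^ 2 * sn x * cn x)) x)
    (hsn0 : sn 0 = 0) (hcn0 : cn 0 = 1) (hdn0 : dn 0 = 1) :
    ∀ α ∈ Set.Ioo 0 (Kcomp k),
      0 < Zjac k dn α + k * sn α * cn α * dn α / (1 + k * (sn α) ^ 2) := by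
  intro α hα
  have h : IsJacobiElliptic k sn cn dn := ⟨hsn, hcn, hdn, hsn0, hcn0, hdn0⟩
  have hk_pos : 0 < k := hk.1
  have hk_sq : k ^ 2 < 1 := pow_lt_one₀ hk.1.le hk.2 two_ne_zero
  have sn_pos : 0 < sn α := h.sn_pos hk_sq hα
  have cn_pos : 0 < cn α := h.cn_pos hk_sq hα
  have dn_pos : 0 < dn α := h.dn_pos hk_sq α
  exact add_pos_of_nonneg_of_pos (h.Zjac_nonneg hk_sq (Ioo_subset_Icc_self hα)) (by positivity)

end
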